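/- Let ℓ be a positive integer and let F and G be graphs such that F has at least one edge and there is no homomorphism from F to G. Then there exists a graph H such that H is F-abundant, H has no cycle of length at most ℓ (girth greater than ℓ), and there is no homomorphism from H to G. -/

import Mathlib

/-- `G` contains a copy of `F`, i.e. a subgraph isomorphic to `F`
(equivalently an injective graph homomorphism from `F`). -/
def ContainsCopy {α β : Type*} (F : SimpleGraph α) (G : SimpleGraph β) : Prop :=
  ∃ f : F →g G, Function.Injective f

/-- The number of copies of `H` in `G`, i.e. the number of subgraphs of `G`
isomorphic to `H`. -/
noncomputable def copyCount {α β : Type*} (H : SimpleGraph α) (G : SimpleGraph β) : ℕ :=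
  {G' : G.Subgraph | Nonempty (H ≃g G'.coe)}.ncard

/-- `G` is `ε`-far from `F`-free: every graph obtained from `G` by deleting fewer than
`ε·|V(G)|²` edges still contains a copy of `F`. -/
def FarFromFree {α β : Type*} (F : SimpleGraph α) (G : SimpleGraph β) (ε : ℝ) : Prop :=
  ∀ G' : SimpleGraph β, G' ≤ G →
    ((G.edgeSet \ G'.edgeSet).ncard : ℝ) < ε * (Nat.card β : ℝ) ^ 2 →
    ContainsCopy F G'

/-- `H` is `F`-abundant: there are constants `c, C > 0` such that for every `ε ∈ (0,1)`
and all sufficiently large `n`, every `n`-vertex graph that is `ε`-far from `F`-free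
contains at least `c·ε^C·n^{|V(H)|}` copies of `H`. -/
def Abundant {α β : Type*} (F : SimpleGraph α) (H : SimpleGraph β) : Prop :=
  ∃ c C : ℝ, 0 < c ∧ 0 < C ∧ ∀ ε : ℝ, 0 < ε → ε < 1 → ∃ n₀ : ℕ, ∀ n : ℕ, n₀ ≤ n →
    ∀ G : SimpleGraph (Fin n), FarFromFree F G ε →
      c * ε ^ C * (n : ℝ) ^ (Nat.card β) ≤ (copyCount H G : ℝ)

/-!
A graph `Γ` on `n` vertices that is `ε`-far from `F`-free contains at least `ε n² / e(F)` pairwise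
edge-disjoint copies of `F`. For each dart `(i, j)` of `F`, say that the copies `T` and `T'` are
related along `(i, j)` if `T i` is adjacent to `T' j` in `Γ`. As `T i` and `T j` are adjacent for
every copy `T`, Cauchy–Schwarz shows that this relation is dense, with a polynomial bound, on every
large set of copies, so that tree-like patterns of relations have polynomial density too.

The patterns are indexed by the positions of a game of `d` rounds whose moves are darts of `F`, and
they yield homomorphisms to `Γ` from blow-ups of a strategy graph with vertices `(position, i)`: an
edge joins `(u, i)` to `(v, j)` if `v` continues `u` after the move `(i, j)`. A homomorphism from
the strategy graph to `G` would assign to each position a map `V(F) → V(G)`. Always moving along a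
dart which the current map does not send to an edge of `G` never repeats a map, which is impossible
if `d > |V(G)| ^ |V(F)|`.

Large girth comes from a sparse random subgraph of a large blow-up, with an edge removed from every
short cycle: it still has an edge in each of the large sets of edges violated by a map to `G`.
-/

section

open Finset

section Abundance

variable {α α' β β' γ : Type*} {F : SimpleGraph α} {F' : SimpleGraph α'} {H : SimpleGraph β}
  {H' : SimpleGraph β'}

theorem ContainsCopy.trans {Γ : SimpleGraph γ} : ContainsCopy F' F → ContainsCopy F Γ →
    ContainsCopy F' Γ :=
  fun ⟨f, hf⟩ ⟨g, hg⟩ => ⟨g.comp f, hg.comp hf⟩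

theorem FarFromFree.mono {Γ : SimpleGraph γ} {ε : ℝ} (hF : ContainsCopy F' F)
    (hΓ : FarFromFree F Γ ε) : FarFromFree F' Γ ε :=
  fun Γ' hle hlt => hF.trans (hΓ Γ' hle hlt)

theorem Abundant.mono (hF : ContainsCopy F' F) : Abundant F' H → Abundant F H
  | ⟨c, C, hc, hC, h⟩ => ⟨c, C, hc, hC, fun ε hε hε' =>
      (h ε hε hε').imp fun _ hn₀ n hn Γ hΓ => hn₀ n hn Γ (hΓ.mono hF)⟩

theorem copyCount_congr (e : H ≃g H') (Γ : SimpleGraph γ) : copyCount H Γ = copyCount H' Γ :=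
  congrArg Set.ncard <| Set.ext fun _ =>
    ⟨fun ⟨f⟩ => ⟨e.symm.trans f⟩, fun ⟨f⟩ => ⟨e.trans f⟩⟩

theorem Abundant.congr (e : H ≃g H') (h : Abundant F H) : Abundant F H' := by
  simpa only [Abundant, copyCount_congr e, Nat.card_congr e.toEquiv] using h

theorem exists_adj_induce_support (F : SimpleGraph α) (i : F.support) :
    ∃ j, (F.induce F.support).Adj i j :=
  let ⟨j, hij⟩ := i.2
  ⟨⟨j, i, hij.symm⟩, hij⟩

theorem nonempty_support {F : SimpleGraph α} : F.edgeSet.Nonempty → F.support.Nonempty := by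
  rintro ⟨⟨i, j⟩, hij⟩
  exact ⟨i, j, hij⟩

theorem isEmpty_hom_of_induce_support {F : SimpleGraph α} {G : SimpleGraph γ}
    (hF : F.edgeSet.Nonempty) (hFG : IsEmpty (F →g G)) :
    IsEmpty (F.induce F.support →g G) := by
  classical
  refine ⟨fun f => ?_⟩
  obtain ⟨e, he⟩ := hF
  induction e with | _ i j =>
  exact hFG.false
    { toFun := fun v => if hv : v ∈ F.support then f ⟨v, hv⟩ else f ⟨i, j, he⟩
      map_rel' := fun {v w} hvw => by
        rw [dif_pos ⟨w, hvw⟩, dif_pos ⟨v, hvw.symm⟩]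
        exact f.map_rel hvw }

end Abundance

section Packing

variable {α β : Type*} {F : SimpleGraph α} {Γ : SimpleGraph β}

/-- A family of homomorphisms `F → Γ` whose images share no edge of `Γ`: a packing of `Γ` by copies
of `F`, except that injectivity is not asked for. -/
def IsEdgePacking (𝒯 : Set (F →g Γ)) : Prop :=
  𝒯.PairwiseDisjoint fun T => Sym2.map T '' F.edgeSet

theorem IsEdgePacking.eq_of_apply_eq {𝒯 : Set (F →g Γ)} (h𝒯 : IsEdgePacking 𝒯) {T T' : F →g Γ}
    (hT : T ∈ 𝒯) (hT' : T' ∈ 𝒯) {i j : α} (hij : F.Adj i j) (hi : T i = T' i) (hj : T j = T' j) :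
    T = T' :=
  h𝒯.elim hT hT' <| Set.not_disjoint_iff.mpr
    ⟨s(T i, T j), ⟨s(i, j), hij, rfl⟩, s(i, j), hij, by rw [Sym2.map_mk, hi, hj]⟩

theorem FarFromFree.exists_isEdgePacking [Finite α] [Finite β] {ε : ℝ}
    (hF : F.edgeSet.Nonempty) (hΓ : FarFromFree F Γ ε) :
    ∃ 𝒯 : Set (F →g Γ), IsEdgePacking 𝒯 ∧
      ε * (Nat.card β : ℝ) ^ 2 ≤ 𝒯.ncard * F.edgeSet.ncard := by
  have : Finite (F →g Γ) := DFunLike.finite _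
  obtain ⟨𝒯, h𝒯, hmax⟩ := (Set.toFinite {𝒯 : Set (F →g Γ) | IsEdgePacking 𝒯}).exists_maximal
    ⟨∅, Set.pairwiseDisjoint_empty⟩
  refine ⟨𝒯, h𝒯, not_lt.mp fun hlt => ?_⟩
  set X : Set (Sym2 β) := ⋃ T ∈ 𝒯, Sym2.map T '' F.edgeSet
  have hX_card : X.ncard ≤ 𝒯.ncard * F.edgeSet.ncard := by
    obtain ⟨t, rfl⟩ := 𝒯.toFinite.exists_finset_coe
    rw [Set.ncard_coe_finset]
    refine (t.set_ncard_biUnion_le _).trans (sum_le_card_nsmul _ _ _ fun T _ => ?_)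
    exact Set.ncard_image_le F.edgeSet.toFinite
  have hdel : ((Γ.edgeSet \ (Γ.deleteEdges X).edgeSet).ncard : ℝ) <
      ε * (Nat.card β : ℝ) ^ 2 := by
    refine lt_of_le_of_lt ?_ hlt
    rw [SimpleGraph.edgeSet_deleteEdges, sdiff_sdiff_right_self]
    exact_mod_cast (Set.ncard_le_ncard Set.inter_subset_right).trans hX_card
  obtain ⟨f, -⟩ := hΓ _ (Γ.deleteEdges_le X) hdel
  let T : F →g Γ := (SimpleGraph.Hom.ofLE (Γ.deleteEdges_le X)).comp f
  have hT_notMem : ∀ e ∈ F.edgeSet, Sym2.map T e ∉ X := fun e he => by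
    have := f.map_mem_edgeSet he
    rw [SimpleGraph.edgeSet_deleteEdges] at this
    exact this.2
  have hT_disj : IsEdgePacking (insert T 𝒯) :=
    Set.PairwiseDisjoint.insert h𝒯 fun T' hT' _ => Set.disjoint_left.mpr <| by
      rintro _ ⟨e, he, rfl⟩ he'
      exact hT_notMem e he (Set.mem_biUnion hT' he')
  obtain ⟨e, he⟩ := hF
  have hT_mem : T ∈ 𝒯 := hmax hT_disj (Set.subset_insert T 𝒯) (Set.mem_insert T 𝒯)
  exact hT_notMem e he (Set.mem_biUnion hT_mem ⟨e, he, rfl⟩)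

end Packing

section HereditaryDensity

open Classical in
/-- `R` is hereditarily dense at scale `N` if every set `B` of at least `δ N` points contains a
point related to at least `δ² N` points of `B`. -/
def IsHereditarilyDense {Ω : Type*} (R : Ω → Ω → Prop) (N : ℝ) : Prop :=
  ∀ δ : ℝ, 0 < δ → ∀ B : Finset Ω, δ * N ≤ #B → ∃ T ∈ B, δ ^ 2 * N ≤ #{T' ∈ B | R T T'}

theorem IsHereditarilyDense.mono {Ω : Type*} {R R' : Ω → Ω → Prop} {N : ℝ}
    (hR : IsHereditarilyDense R N) (hRR' : ∀ T T', R T T' → R' T T') :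
    IsHereditarilyDense R' N := fun δ hδ B hB => by
  classical
  obtain ⟨T, hT, hle⟩ := hR δ hδ B hB
  exact ⟨T, hT, hle.trans <| mod_cast card_le_card <| monotone_filter_right _ fun T' _ => hRR' T T'⟩

theorem sq_card_le_card_mul_sum_card_filter {V W : Type*} [Fintype V] [Fintype W]
    [DecidableEq V] [DecidableEq W] (B : Finset (V × W)) :
    #B ^ 2 ≤ Fintype.card W * ∑ x, #{Q ∈ B | (x, Q.2) ∈ B} := by
  have hfiber (y : W) : #{x | (x, y) ∈ B} = #{Q ∈ B | Q.2 = y} :=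
    card_bij' (fun x _ => (x, y)) (fun Q _ => Q.1) (by simp) (by aesop) (by simp) (by aesop)
  calc #B ^ 2 = (∑ y, #{Q ∈ B | Q.2 = y}) ^ 2 := by
        rw [← card_eq_sum_card_fiberwise fun _ _ => mem_univ _]
    _ ≤ Fintype.card W * ∑ y, #{Q ∈ B | Q.2 = y} ^ 2 := sq_sum_le_card_mul_sum_sq
    _ = Fintype.card W * ∑ Q ∈ B, #{x | (x, Q.2) ∈ B} := by
        simp_rw [hfiber, ← sum_fiberwise B Prod.snd, sq]
        refine congrArg _ (sum_congr rfl fun y _ => ?_)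
        rw [← smul_eq_mul, ← sum_const]
        exact sum_congr rfl fun Q hQ => by rw [(mem_filter.mp hQ).2]
    _ = Fintype.card W * ∑ x, #{Q ∈ B | (x, Q.2) ∈ B} := by
        exact congrArg _ (sum_card_bipartiteAbove_eq_sum_card_bipartiteBelow
          fun (x : V) (Q : V × W) => (x, Q.2) ∈ B).symm

theorem exists_mem_le_card_filter_mk_mem {V W : Type*} [Fintype V] [Fintype W]
    [DecidableEq V] [DecidableEq W] {B : Finset (V × W)} (hB : B.Nonempty) {δ : ℝ} (hδ : 0 < δ)
    (hcard : δ * (Fintype.card V * Fintype.card W) ≤ #B) :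
    ∃ P ∈ B, δ ^ 2 * (Fintype.card V * Fintype.card W) ≤ #{Q ∈ B | (P.1, Q.2) ∈ B} := by
  obtain ⟨P₀, -⟩ := hB
  have hV : 0 < (Fintype.card V : ℝ) := mod_cast Fintype.card_pos_iff.mpr ⟨P₀.1⟩
  have hW : 0 < (Fintype.card W : ℝ) := mod_cast Fintype.card_pos_iff.mpr ⟨P₀.2⟩
  have hsum : ∑ _x : V, δ ^ 2 * (Fintype.card V * Fintype.card W : ℝ) ≤
      ∑ x : V, (#{Q ∈ B | (x, Q.2) ∈ B} : ℝ) := by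
    refine le_of_mul_le_mul_left ?_ hW
    calc Fintype.card W * ∑ _x : V, δ ^ 2 * (Fintype.card V * Fintype.card W : ℝ)
        = (δ * (Fintype.card V * Fintype.card W)) ^ 2 := by
          rw [sum_const, card_univ, nsmul_eq_mul]; ring
      _ ≤ (#B : ℝ) ^ 2 := by gcongr
      _ ≤ _ := mod_cast sq_card_le_card_mul_sum_card_filter B
  obtain ⟨x, -, hx⟩ := exists_le_of_sum_le ⟨P₀.1, mem_univ _⟩ hsum
  obtain ⟨Q, hQ⟩ : {Q ∈ B | (x, Q.2) ∈ B}.Nonempty := by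
    rw [← card_pos, ← Nat.cast_pos (α := ℝ)]
    exact lt_of_lt_of_le (by positivity) hx
  exact ⟨(x, Q.2), (mem_filter.mp hQ).2, hx⟩

theorem isHereditarilyDense_of_injective {V W Ω : Type*} [Fintype V] [Fintype W] [Nonempty V]
    [Nonempty W] (a : Ω → V) (b : Ω → W) (hab : Function.Injective fun T => (a T, b T)) :
    IsHereditarilyDense (fun T T' => ∃ T'', a T'' = a T ∧ b T'' = b T')
      (Fintype.card V * Fintype.card W) := by
  classical
  intro δ hδ B hB
  have hpos : 0 < (Fintype.card V * Fintype.card W : ℝ) := by positivity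
  set B' : Finset (V × W) := B.image fun T => (a T, b T)
  have hB' : #B' = #B := card_image_of_injective _ hab
  have hne : B'.Nonempty := by
    rw [← card_pos, hB', ← Nat.cast_pos (α := ℝ)]
    exact (mul_pos hδ hpos).trans_le hB
  obtain ⟨P, hP, hle⟩ := exists_mem_le_card_filter_mk_mem hne hδ (by rwa [hB'])
  obtain ⟨T, hT, rfl⟩ := mem_image.mp hP
  refine ⟨T, hT, hle.trans ?_⟩
  norm_cast
  rw [filter_image]
  refine card_image_le.trans (card_le_card fun T' hT' => ?_)
  rw [mem_filter, mem_image] at hT'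
  obtain ⟨hT'B, T'', -, h⟩ := hT'
  exact mem_filter.mpr ⟨hT'B, T'', Prod.ext_iff.mp h⟩

end HereditaryDensity

section Words

variable {E : Type*} {d : ℕ}

/-- Words over `E` of length less than `d`, the positions of a game of `d` rounds in which each move
is a letter. -/
abbrev Word (E : Type*) (d : ℕ) : Type _ := {w : List E // w.length < d}

instance [Finite E] : Finite (Word E d) := List.finite_length_lt E d

noncomputable instance [Finite E] : Fintype (Word E d) := Fintype.ofFinite _

/-- The word `v` starts with the word `u` followed by the letter `e`: the position `v` can be
reached from `u` if the next move is `e`. -/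
def Word.Arc (e : E) (u v : Word E d) : Prop := u.1 ++ [e] <+: v.1

/-- A nonempty word consists of its first letter and the remaining word. -/
def Word.succEquiv : Word E (d + 1) ≃ Option (E × Word E d) where
  toFun
    | ⟨[], _⟩ => none
    | ⟨e :: w, hw⟩ => some (e, ⟨w, Nat.lt_of_succ_lt_succ hw⟩)
  invFun
    | none => ⟨[], d.succ_pos⟩
    | some (e, w) => ⟨e :: w.1, Nat.succ_lt_succ w.2⟩
  left_inv := by rintro ⟨_ | _, _⟩ <;> rfl
  right_inv := by rintro (_ | _) <;> rfl

theorem Word.card_succ [Fintype E] :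
    Fintype.card (Word E (d + 1)) = Fintype.card E * Fintype.card (Word E d) + 1 := by
  rw [Fintype.card_congr Word.succEquiv, Fintype.card_option, Fintype.card_prod]

theorem Word.le_ncard_range {K : Type*} [Finite K] (e : K → E) (κ : Word E d → K)
    (hκ : ∀ u v, Word.Arc (e (κ u)) u v → κ u ≠ κ v) : d ≤ (Set.range κ).ncard := by
  induction d with
  | zero => exact Nat.zero_le _
  | succ d ih =>
    let root : Word E (d + 1) := Word.succEquiv.symm none
    let e₀ := e (κ root)
    let reply (w : Word E d) : Word E (d + 1) := Word.succEquiv.symm (some (e₀, w))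
    have hreply : d ≤ (Set.range (κ ∘ reply)).ncard := ih _ fun u v huv =>
      hκ (reply u) (reply v) (List.cons_prefix_cons.mpr ⟨rfl, huv⟩)
    have hroot : κ root ∉ Set.range (κ ∘ reply) := fun ⟨w, hw⟩ =>
      hκ root (reply w) (List.prefix_append [e₀] w.1) hw.symm
    calc d + 1 ≤ (insert (κ root) (Set.range (κ ∘ reply))).ncard := by
          rw [Set.ncard_insert_of_notMem hroot]; omega
      _ ≤ (Set.range κ).ncard := Set.ncard_le_ncard <| Set.insert_subset (Set.mem_range_self _) <|
          Set.range_comp_subset_range _ _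

end Words

section StrategyGraph

variable {α γ : Type*}

instance [Finite α] (F : SimpleGraph α) : Finite F.Dart :=
  Finite.of_injective _ SimpleGraph.Dart.toProd_injective

/-- The vertex `(u, i)` stands for the pair formed by a position `u` of the game and a vertex `i` of
`F`; a move is a dart `(i, j)` of `F`. The edges that a move from `u` creates towards all later
positions `v` are `(u, i) (v, j)`. A colouring of the vertices by `V(G)` attaches to each position a
map `V(F) → V(G)`, and answering with a dart which that map does not send to an edge defeats it. -/
def strategyGraph (F : SimpleGraph α) (d : ℕ) : SimpleGraph (Word F.Dart d × α) where
  Adj p q := ∃ D : F.Dart, D.fst = p.2 ∧ D.snd = q.2 ∧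
    (Word.Arc D p.1 q.1 ∨ Word.Arc D.symm q.1 p.1)
  symm := ⟨fun _ _ ⟨D, hp, hq, h⟩ => ⟨D.symm, hq, hp, by rwa [D.symm_symm, or_comm]⟩⟩
  loopless := ⟨fun _ ⟨D, hp, hq, _⟩ => D.fst_ne_snd (hp.trans hq.symm)⟩

theorem isEmpty_hom_strategyGraph [Finite α] [Finite γ] {F : SimpleGraph α} {G : SimpleGraph γ}
    (hFG : IsEmpty (F →g G)) {d : ℕ} (hd : Nat.card (α → γ) < d) :
    IsEmpty (strategyGraph F d →g G) := by
  have hmove (κ : α → γ) : ∃ D : F.Dart, ¬ G.Adj (κ D.fst) (κ D.snd) := by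
    by_contra! h
    exact hFG.false ⟨κ, fun {i j} hij => h ⟨(i, j), hij⟩⟩
  choose move hmove using hmove
  refine ⟨fun φ => hd.not_ge ?_⟩
  let κ (u : Word F.Dart d) (i : α) : γ := φ (u, i)
  refine (Word.le_ncard_range move κ fun u v harc hκ => hmove (κ u) ?_).trans (Set.ncard_le_card _)
  have hadj : G.Adj (κ u (move (κ u)).fst) (κ v (move (κ u)).snd) :=
    φ.map_rel ⟨move (κ u), rfl, rfl, .inl harc⟩
  rwa [← hκ] at hadj

end StrategyGraph

section Patterns

variable {E M Ω : Type*} {d : ℕ} {R : E → Ω → Ω → Prop} {S : Finset Ω}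

open Classical in
theorem exists_subset_forall_le_card_filter [Fintype E] {N δ : ℝ} (hN : 0 ≤ N) (hδ : 0 < δ)
    (hR : ∀ e, IsHereditarilyDense (R e) N) (hS : δ * N ≤ #S) :
    ∃ S' ⊆ S, δ / 2 * N ≤ #S' ∧
      ∀ T ∈ S', ∀ e, (δ / (2 * (Fintype.card E + 1))) ^ 2 * N ≤ #{T' ∈ S | R e T T'} := by
  set β : ℝ := δ / (2 * (Fintype.card E + 1)) with hβ
  let bad (e : E) : Finset Ω := {T ∈ S | (#{T' ∈ S | R e T T'} : ℝ) < β ^ 2 * N}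
  have hbad (e : E) : (#(bad e) : ℝ) ≤ β * N := by
    by_contra! hlt
    obtain ⟨T, hT, hle⟩ := hR e β (by positivity) (bad e) hlt.le
    refine (mem_filter.mp hT).2.not_ge (hle.trans ?_)
    norm_cast
    exact card_le_card (filter_subset_filter _ (filter_subset _ _))
  have hbad_union : (#(univ.biUnion bad) : ℝ) ≤ δ / 2 * N := calc
    (#(univ.biUnion bad) : ℝ) ≤ ∑ e, (#(bad e) : ℝ) := mod_cast card_biUnion_le
    _ ≤ Fintype.card E * (β * N) := by
      rw [← nsmul_eq_mul]; exact sum_le_card_nsmul _ _ _ fun e _ => hbad e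
    _ ≤ (Fintype.card E + 1) * (β * N) := by gcongr; linarith
    _ = δ / 2 * N := by rw [hβ]; field_simp
  refine ⟨S \ univ.biUnion bad, sdiff_subset, ?_, fun T hT e => ?_⟩
  · have : (#S : ℝ) ≤ #(S \ univ.biUnion bad) + #(univ.biUnion bad) :=
      mod_cast card_le_card_sdiff_add_card
    linarith
  · rw [mem_sdiff, mem_biUnion] at hT
    by_contra! hlt
    exact hT.2 ⟨e, mem_univ e, mem_filter.mpr ⟨hT.1, hlt⟩⟩

variable [Fintype M] [Fintype Ω]

open Classical in
theorem pow_mul_le_card_pow_mul_card_filter {X : Type*} [Fintype X] [Nonempty M]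
    (A : Ω → Finset X) {q : ℝ} (hq : 0 ≤ q) (hA : ∀ T ∈ S, q ≤ #(A T)) :
    (#S * q) ^ Fintype.card M ≤ (Fintype.card X : ℝ) ^ (Fintype.card M - 1) *
      #{p : X × (M → Ω) | ∀ m, p.2 m ∈ S ∧ p.1 ∈ A (p.2 m)} := by
  obtain ⟨k, hk⟩ : ∃ k, Fintype.card M = k + 1 :=
    Nat.exists_eq_succ_of_ne_zero Fintype.card_ne_zero
  have hsum : (#S : ℝ) * q ≤ ∑ x, (#{T ∈ S | x ∈ A T} : ℝ) := by
    calc (#S : ℝ) * q ≤ ∑ T ∈ S, (#(A T) : ℝ) := by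
          rw [← nsmul_eq_mul]; exact card_nsmul_le_sum _ _ _ hA
      _ = ∑ x, (#{T ∈ S | x ∈ A T} : ℝ) := by
          have := sum_card_bipartiteAbove_eq_sum_card_bipartiteBelow (s := S) (t := univ)
            fun T x => x ∈ A T
          simp only [bipartiteAbove, bipartiteBelow, filter_mem_eq_inter, univ_inter] at this
          exact_mod_cast this
  have hpairs : #{p : X × (M → Ω) | ∀ m, p.2 m ∈ S ∧ p.1 ∈ A (p.2 m)} =
      ∑ x, #{T ∈ S | x ∈ A T} ^ (k + 1) := by
    rw [← hk, card_filter, Fintype.sum_prod_type]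
    refine sum_congr rfl fun x _ => ?_
    rw [← card_filter, ← card_univ, ← prod_const, ← Fintype.card_piFinset]
    exact congrArg card (by ext t; simp)
  calc (#S * q) ^ Fintype.card M
      ≤ (∑ x, (#{T ∈ S | x ∈ A T} : ℝ)) ^ (k + 1) := by rw [hk]; gcongr
    _ ≤ (Fintype.card X : ℝ) ^ k * ∑ x, (#{T ∈ S | x ∈ A T} : ℝ) ^ (k + 1) :=
        pow_sum_le_card_mul_sum_pow (fun _ _ => Nat.cast_nonneg _) k
    _ = _ := by rw [hpairs, hk, Nat.add_sub_cancel]; push_cast; rfl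

open Classical in
/-- The maps placing `|M|` points of `S` at each word so that every point at `u` is `R e`-related to
every point at each later `v` with an arc `e` from `u`. -/
noncomputable def patterns [Finite E] (R : E → Ω → Ω → Prop) (d : ℕ) (M : Type*) [Fintype M]
    (S : Finset Ω) : Finset (Word E d × M → Ω) :=
  {f | (∀ p, f p ∈ S) ∧ ∀ e u v m m', Word.Arc e u v → R e (f (u, m)) (f (v, m'))}

theorem mem_patterns [Finite E] {f : Word E d × M → Ω} : f ∈ patterns R d M S ↔
    (∀ p, f p ∈ S) ∧ ∀ e u v m m', Word.Arc e u v → R e (f (u, m)) (f (v, m')) := by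
  classical
  exact mem_filter_univ _

open Classical in
theorem card_roots_le_card_patterns_succ [Fintype E] [Nonempty M] {S' : Finset Ω} (hS' : S' ⊆ S) :
    #{p : (E → Word E d × M → Ω) × (M → Ω) | ∀ m, p.2 m ∈ S' ∧
      p.1 ∈ Fintype.piFinset fun e => patterns R d M {T ∈ S | R e (p.2 m) T}} ≤
    #(patterns R (d + 1) M S) := by
  let glue (p : (E → Word E d × M → Ω) × (M → Ω)) : Word E (d + 1) × M → Ω
    | (⟨[], _⟩, m) => p.2 m
    | (⟨e :: w, hw⟩, m) => p.1 e (⟨w, Nat.lt_of_succ_lt_succ hw⟩, m)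
  refine card_le_card_of_injOn glue (fun ⟨g, t⟩ hp => ?_) fun ⟨g, t⟩ _ ⟨g', t'⟩ _ h => ?_
  · simp only [coe_filter, mem_univ, true_and, Set.mem_ofPred_eq, Fintype.mem_piFinset,
      mem_patterns, mem_filter] at hp ⊢
    rw [mem_coe, mem_patterns]
    have m₀ : M := Classical.arbitrary M
    refine ⟨?_, ?_⟩
    · rintro ⟨⟨_ | ⟨e, w⟩, _⟩, m⟩
      · exact hS' (hp m).1
      · exact (((hp m).2 e).1 _).1
    · rintro e ⟨_ | ⟨e₁, u⟩, _⟩ ⟨_ | ⟨e₂, v⟩, _⟩ m m' h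
      · simp [Word.Arc] at h
      · obtain ⟨rfl, -⟩ := List.cons_prefix_cons.mp h
        exact (((hp m).2 e).1 _).2
      · simp [Word.Arc] at h
      · obtain ⟨rfl, huv⟩ := List.cons_prefix_cons.mp h
        exact ((hp m₀).2 e₁).2 e ⟨u, _⟩ ⟨v, _⟩ m m' huv
  · refine Prod.ext (funext₂ fun e p => ?_) (funext fun m => ?_)
    · exact congrFun h (Word.succEquiv.symm (some (e, p.1)), p.2)
    · exact congrFun h (Word.succEquiv.symm none, m)

open Classical in
theorem pow_le_card_patterns_succ [Fintype E] [Nonempty M] {S' : Finset Ω}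
    (hS' : S' ⊆ S) {N q : ℝ} (hN : Fintype.card Ω ≤ N) (hq : 0 ≤ q)
    (hcard : ∀ T ∈ S', ∀ e, q ≤ #(patterns R d M {T' ∈ S | R e T T'})) :
    (#S' * q ^ Fintype.card E) ^ Fintype.card M ≤
      N ^ (Fintype.card (Word E d) * Fintype.card M * Fintype.card E * (Fintype.card M - 1)) *
        #(patterns R (d + 1) M S) := by
  have hN₀ : 0 ≤ N := (Nat.cast_nonneg _).trans hN
  refine (pow_mul_le_card_pow_mul_card_filter (M := M)
    (fun T => Fintype.piFinset fun e => patterns R d M {T' ∈ S | R e T T'})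
    (pow_nonneg hq _) fun T hT => ?_).trans ?_
  · rw [Fintype.card_piFinset, Nat.cast_prod, ← card_univ, ← prod_const]
    exact prod_le_prod (fun _ _ => hq) fun e _ => hcard T hT e
  · refine mul_le_mul ?_ ?_ (Nat.cast_nonneg _) (by positivity)
    · rw [pow_mul]
      refine pow_le_pow_left₀ (by positivity) ?_ _
      simp only [Fintype.card_fun, Fintype.card_prod, Nat.cast_pow, ← pow_mul]
      exact pow_le_pow_left₀ (by positivity) hN _
    · norm_cast
      convert card_roots_le_card_patterns_succ (M := M) hS'

theorem exists_le_card_patterns (E M : Type*) [Finite E] [Fintype M] [Nonempty M] (d : ℕ) :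
    ∃ c : ℝ, 0 < c ∧ ∃ k : ℕ, ∀ (Ω : Type*) [Fintype Ω] (R : E → Ω → Ω → Prop) (N : ℝ), 0 < N →
      Fintype.card Ω ≤ N → (∀ e, IsHereditarilyDense (R e) N) →
      ∀ δ : ℝ, 0 < δ → ∀ S : Finset Ω, δ * N ≤ #S →
        c * δ ^ k * N ^ (Fintype.card (Word E d) * Fintype.card M) ≤ #(patterns R d M S) := by
  classical
  have := Fintype.ofFinite E
  induction d with
  | zero =>
    refine ⟨1, one_pos, 0, fun Ω _ R N _ _ _ δ _ S _ => ?_⟩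
    have : IsEmpty (Word E 0) := ⟨fun w => Nat.not_lt_zero _ w.2⟩
    simp [patterns]
  | succ d ih =>
    obtain ⟨c, hc, k, ih⟩ := ih
    obtain ⟨m, hm⟩ : ∃ m, Fintype.card M = m + 1 :=
      Nat.exists_eq_succ_of_ne_zero Fintype.card_ne_zero
    set r := Fintype.card E with hr
    set a : ℝ := (1 / (2 * (r + 1))) ^ 2 with ha
    refine ⟨(1 / 2 * (c * a ^ k) ^ r) ^ (m + 1), by positivity, (1 + 2 * k * r) * (m + 1),
      fun Ω _ R N hN hΩ hR δ hδ S hS => ?_⟩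
    obtain ⟨S', hS'S, hS', hnbr⟩ := exists_subset_forall_le_card_filter hN.le hδ hR hS
    set y := Fintype.card (Word E d) with hy
    have hq (T : Ω) (hT : T ∈ S') (e : E) : c * (a * δ ^ 2) ^ k * N ^ (y * (m + 1)) ≤
        #(patterns R d M {T' ∈ S | R e T T'}) := by
      rw [← hm]
      refine ih Ω R N hN hΩ hR (a * δ ^ 2) (by positivity) _ (le_of_eq_of_le ?_ (hnbr T hT e))
      rw [ha]; ring
    have hstep := pow_le_card_patterns_succ hS'S hΩ (by positivity) hq
    rw [hm, Nat.add_sub_cancel, ← hr, ← hy] at hstep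
    have hpos : 0 < N ^ (y * (m + 1) * r * m) := by positivity
    refine le_of_mul_le_mul_left (le_trans ?_ hstep) hpos
    rw [Word.card_succ, hm, ← hr, ← hy]
    calc _ = (δ / 2 * N * (c * (a * δ ^ 2) ^ k * N ^ (y * (m + 1))) ^ r) ^ (m + 1) := by ring
      _ ≤ _ := by gcongr

end Patterns

section HomAbundance

/-- The counterpart of `Abundant` for homomorphisms, with a bound for every number `n > 0` of
vertices. -/
def HomAbundant {α β : Type*} (F : SimpleGraph α) (H : SimpleGraph β) : Prop :=
  ∃ c : ℝ, 0 < c ∧ ∃ k : ℕ, ∀ n : ℕ, 0 < n → ∀ (Γ : SimpleGraph (Fin n)) (ε : ℝ), 0 < ε →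
    FarFromFree F Γ ε → c * ε ^ k * (n : ℝ) ^ Nat.card β ≤ Nat.card (H →g Γ)

variable {α β κ : Type*} {F : SimpleGraph α} {Γ : SimpleGraph β} {𝒯 : Set (F →g Γ)} {d : ℕ}

theorem IsEdgePacking.injective (h𝒯 : IsEdgePacking 𝒯) (D : F.Dart) :
    Function.Injective fun T : 𝒯 => (T.1 D.fst, T.1 D.snd) := fun T T' h =>
  Subtype.ext <| h𝒯.eq_of_apply_eq T.2 T'.2 D.adj (congrArg Prod.fst h) (congrArg Prod.snd h)

/-- The copy `T` meets the copy `T'` along `D` if the first end of `D` in `T` is adjacent to the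
second end of `D` in `T'`. -/
def CrossAdj (𝒯 : Set (F →g Γ)) (D : F.Dart) (T T' : 𝒯) : Prop :=
  Γ.Adj (T.1 D.fst) (T'.1 D.snd)

theorem IsEdgePacking.isHereditarilyDense_crossAdj [Fintype β] [Nonempty β]
    (h𝒯 : IsEdgePacking 𝒯) (D : F.Dart) :
    IsHereditarilyDense (CrossAdj 𝒯 D) (Fintype.card β * Fintype.card β) :=
  (isHereditarilyDense_of_injective (fun T : 𝒯 => T.1 D.fst) (fun T => T.1 D.snd)
    (h𝒯.injective D)).mono fun _ _ ⟨T'', hfst, hsnd⟩ => by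
      rw [CrossAdj, ← hfst, ← hsnd]
      exact T''.1.map_rel D.adj

theorem IsEdgePacking.card_patterns_le [Fintype α] [Finite β] [Fintype κ] [Fintype 𝒯]
    (h𝒯 : IsEdgePacking 𝒯) (hF : ∀ i, ∃ j, F.Adj i j)
    {H : SimpleGraph ((Word F.Dart d × α) × κ)} (hH : H ≤ (strategyGraph F d).comap Prod.fst) :
    #(patterns (CrossAdj 𝒯) d (α × κ) univ) ≤
      Nat.card (H →g Γ) * Nat.card β ^ Nat.card ((Word F.Dart d × α) × κ) := by
  have : Finite (H →g Γ) := DFunLike.finite _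
  choose nb hnb using hF
  rw [← Nat.card_fun, ← Nat.card_prod, ← Nat.card_eq_finsetCard]
  -- The image of a neighbour of `i` is recorded too, so that the copy at `(u, i, a)` is determined.
  let toHom (f : patterns (CrossAdj 𝒯) d (α × κ) univ) : H →g Γ :=
    { toFun := fun x => (f.1 (x.1.1, x.1.2, x.2)).1 x.1.2
      map_rel' := fun {x y} hxy => by
        obtain ⟨D, hx, hy, h⟩ := hH hxy
        have hf := (mem_patterns.mp f.2).2
        rw [← hx, ← hy]
        exact h.elim (hf D _ _ _ _) fun h => (hf D.symm _ _ _ _ h).symm }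
  refine Nat.card_le_card_of_injective
    (fun f => (toHom f, fun x => (f.1 (x.1.1, x.1.2, x.2)).1 (nb x.1.2)))
    fun f f' h => Subtype.ext <| funext fun ⟨u, i, a⟩ => ?_
  refine h𝒯.injective ⟨(i, nb i), hnb i⟩ (Prod.ext ?_ ?_)
  · exact DFunLike.congr_fun (congrArg Prod.fst h) ((u, i), a)
  · exact congrFun (congrArg Prod.snd h) ((u, i), a)

theorem homAbundant_of_le_comap_strategyGraph [Finite α] [Nonempty α] [Finite κ] [Nonempty κ]
    (hF : ∀ i, ∃ j, F.Adj i j) {H : SimpleGraph ((Word F.Dart d × α) × κ)}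
    (hH : H ≤ (strategyGraph F d).comap Prod.fst) : HomAbundant F H := by
  have := Fintype.ofFinite α
  have := Fintype.ofFinite κ
  obtain ⟨c, hc, k, hpat⟩ := exists_le_card_patterns F.Dart (α × κ) d
  obtain ⟨i, j, hij⟩ : ∃ i j, F.Adj i j := ⟨Classical.arbitrary α, hF _⟩
  have hE : F.edgeSet.Nonempty := ⟨s(i, j), hij⟩
  set m := F.edgeSet.ncard
  have hm : 0 < m := (Set.ncard_pos F.edgeSet.toFinite).mpr hE
  refine ⟨c * (m : ℝ)⁻¹ ^ k, by positivity, k, fun n hn Γ ε hε hΓ => ?_⟩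
  obtain ⟨𝒯, h𝒯, hcard⟩ := hΓ.exists_isEdgePacking hE
  have := Fintype.ofFinite 𝒯
  have : Nonempty (Fin n) := ⟨⟨0, hn⟩⟩
  set W := (Word F.Dart d × α) × κ
  have hW : Fintype.card (Word F.Dart d) * Fintype.card (α × κ) = Nat.card W := by
    simp only [W, Nat.card_eq_fintype_card, Fintype.card_prod, mul_assoc]
  have h𝒯_le : (Fintype.card 𝒯 : ℝ) ≤ n * n := by
    have := Fintype.card_le_of_injective _ (h𝒯.injective ⟨(i, j), hij⟩)
    rw [Fintype.card_prod, Fintype.card_fin] at this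
    exact_mod_cast this
  have hle_𝒯 : ε / m * (n * n) ≤ #(univ : Finset 𝒯) := by
    rw [card_univ, ← Nat.card_eq_fintype_card, Nat.card_coe_set_eq, div_mul_eq_mul_div,
      div_le_iff₀ (by positivity), ← sq]
    simpa only [Nat.card_fin] using hcard
  have hcount := (hpat 𝒯 (CrossAdj 𝒯) (n * n) (by positivity) h𝒯_le
    (fun D => by simpa only [Fintype.card_fin] using h𝒯.isHereditarilyDense_crossAdj D)
    (ε / m) (by positivity) univ hle_𝒯).trans (Nat.cast_le.mpr (h𝒯.card_patterns_le hF hH))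
  rw [hW, Nat.card_fin, Nat.cast_mul, Nat.cast_pow] at hcount
  have hpos : 0 < (n : ℝ) ^ Nat.card W := by positivity
  refine le_of_mul_le_mul_right (le_of_eq_of_le ?_ hcount) hpos
  rw [div_eq_mul_inv]
  ring

end HomAbundance

section Copies

variable {α β V : Type*} {F : SimpleGraph α}

theorem card_copy_le_factorial_mul_copyCount [Finite β] [Finite V] (H : SimpleGraph β)
    (Γ : SimpleGraph V) :
    Nat.card (H.Copy Γ) ≤ copyCount H Γ * (Nat.card β).factorial := by
  rw [copyCount, ← Nat.card_coe_set_eq, ← Nat.card_perm, ← Nat.card_prod]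
  have hcopy (c : H.Copy Γ) : ∃ p : {S : Γ.Subgraph | Nonempty (H ≃g S.coe)} × Equiv.Perm β,
      ∀ b, (p.1.2.some (p.2 b) : V) = c b := by
    have hS : Nonempty (H ≃g c.toSubgraph.coe) := ⟨c.isoToSubgraph⟩
    refine ⟨(⟨c.toSubgraph, hS⟩, c.isoToSubgraph.toEquiv.trans hS.some.symm.toEquiv), fun b => ?_⟩
    exact congrArg Subtype.val (hS.some.apply_symm_apply (c.isoToSubgraph b))
  choose p hp using hcopy
  refine Nat.card_le_card_of_injective p fun c c' h => DFunLike.ext _ _ fun b => ?_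
  rw [← hp, ← hp, h]

theorem card_hom_add_descFactorial_le [Finite β] [Finite V] (H : SimpleGraph β)
    (Γ : SimpleGraph V) :
    Nat.card (H →g Γ) + (Nat.card V).descFactorial (Nat.card β) ≤
      Nat.card V ^ Nat.card β + Nat.card (H.Copy Γ) := by
  set A : Set (β → V) := Set.range fun f : H →g Γ => ⇑f
  set I : Set (β → V) := {f | Function.Injective f}
  have hA : A.ncard = Nat.card (H →g Γ) := by
    rw [Set.ncard_range_of_injective DFunLike.coe_injective]
  have hI : I.ncard = (Nat.card V).descFactorial (Nat.card β) := by
    have := Fintype.ofFinite β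
    have := Fintype.ofFinite V
    rw [← Nat.card_coe_set_eq]
    refine (Nat.card_congr (Equiv.subtypeInjectiveEquivEmbedding β V)).trans ?_
    simp only [Nat.card_eq_fintype_card, Fintype.card_embedding_eq]
  have hAI : (A ∩ I).ncard ≤ Nat.card (H.Copy Γ) := by
    rw [← Set.ncard_range_of_injective (f := fun c : H.Copy Γ => ⇑c) DFunLike.coe_injective]
    refine Set.ncard_le_ncard ?_
    rintro _ ⟨⟨f, rfl⟩, hf⟩
    exact ⟨⟨f, hf⟩, rfl⟩
  have hunion : (A ∪ I).ncard ≤ Nat.card V ^ Nat.card β := by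
    rw [← Nat.card_fun]
    exact Set.ncard_le_card _
  have := Set.ncard_union_add_ncard_inter A I
  omega

open Filter in
theorem eventually_pow_sub_descFactorial_le (v : ℕ) {η : ℝ} (hη : 0 < η) :
    ∀ᶠ n : ℕ in atTop, (n : ℝ) ^ v - n.descFactorial v ≤ η * (n : ℝ) ^ v := by
  filter_upwards [(isEquivalent_descFactorial v).isLittleO.def hη] with n hn
  simp only [Pi.sub_apply, Real.norm_eq_abs, abs_pow, Nat.abs_cast] at hn
  rw [abs_sub_comm] at hn
  exact (le_abs_self _).trans hn

theorem HomAbundant.abundant [Finite β] {H : SimpleGraph β} (h : HomAbundant F H) :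
    Abundant F H := by
  obtain ⟨c, hc, k, h⟩ := h
  set v := Nat.card β
  refine ⟨c / (2 * v.factorial), (k + 1 : ℕ), by positivity, by positivity, fun ε hε hε' => ?_⟩
  obtain ⟨n₀, hn₀⟩ := Filter.eventually_atTop.mp
    (eventually_pow_sub_descFactorial_le v (by positivity : 0 < c * ε ^ k / 2))
  refine ⟨n₀ + 1, fun n hn Γ hΓ => ?_⟩
  have hhom := h n (by omega) Γ ε hε hΓ
  have hdeg := hn₀ n (by omega)
  have hinj : (Nat.card (H →g Γ) + n.descFactorial v : ℝ) ≤ n ^ v + Nat.card (H.Copy Γ) := by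
    have := card_hom_add_descFactorial_le H Γ
    rw [Nat.card_fin] at this
    exact_mod_cast this
  have hcopy : (Nat.card (H.Copy Γ) : ℝ) ≤ copyCount H Γ * v.factorial :=
    mod_cast card_copy_le_factorial_mul_copyCount H Γ
  rw [Real.rpow_natCast]
  calc c / (2 * v.factorial) * ε ^ (k + 1) * (n : ℝ) ^ v
      ≤ c / (2 * v.factorial) * ε ^ k * (n : ℝ) ^ v := by
        gcongr ?_ * ?_ * _
        exact pow_le_pow_of_le_one hε.le hε'.le k.le_succ
    _ = c * ε ^ k / 2 * (n : ℝ) ^ v / v.factorial := by field_simp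
    _ ≤ copyCount H Γ := by
        rw [div_le_iff₀ (by positivity)]
        linarith

end Copies

section Deletion

theorem sum_mul_card_filter {R ι κ : Type*} [Semiring R] (s : Finset ι) (t : Finset κ) (f : ι → R)
    (r : κ → ι → Prop) [∀ k i, Decidable (r k i)] :
    ∑ i ∈ s, f i * #{k ∈ t | r k i} = ∑ k ∈ t, ∑ i ∈ s with r k i, f i := by
  simp_rw [card_filter, Nat.cast_sum, mul_sum, sum_filter]
  rw [sum_comm]
  simp

variable {T ι κ : Type*}

/-- The probability of the outcome `A` when every element of `T` is selected independently with
probability `p`. -/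
def bernoulliWeight [Fintype T] [DecidableEq T] (p : ℝ) (A : Finset T) : ℝ :=
  p ^ #A * (1 - p) ^ #Aᶜ

theorem sum_bernoulliWeight_subset_disjoint [Fintype T] [DecidableEq T] (p : ℝ) {C D : Finset T}
    (h : Disjoint C D) :
    ∑ A : Finset T with C ⊆ A ∧ Disjoint D A, bernoulliWeight p A = p ^ #C * (1 - p) ^ #D := by
  have hadd (t : T) : ((if t ∉ D then p else 0) + if t ∉ C then 1 - p else 0) =
      (if t ∈ C then p else 1) * if t ∈ D then 1 - p else 1 := by
    by_cases hC : t ∈ C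
    · simp [hC, disjoint_left.mp h hC]
    · by_cases hD : t ∈ D <;> simp [hC, hD]
  calc ∑ A : Finset T with C ⊆ A ∧ Disjoint D A, bernoulliWeight p A
      = ∑ A : Finset T,
          (∏ t ∈ A, if t ∉ D then p else 0) * ∏ t ∈ Aᶜ, if t ∉ C then 1 - p else 0 := by
        rw [sum_filter]
        refine sum_congr rfl fun A _ => ?_
        have hC : C ⊆ A ↔ ∀ t ∈ Aᶜ, t ∉ C := by
          simp only [mem_compl, subset_iff, not_imp_not]
        have hD : Disjoint D A ↔ ∀ t ∈ A, t ∉ D := by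
          rw [disjoint_comm, disjoint_left]
        simp only [prod_ite_zero, prod_const, ite_zero_mul_ite_zero, ← hC, ← hD, bernoulliWeight,
          and_comm]
    _ = p ^ #C * (1 - p) ^ #D := by
        rw [← Fintype.prod_add]
        simp only [hadd, prod_mul_distrib, prod_ite_mem, univ_inter, prod_const]

theorem exists_card_filter_subset_lt [Finite T] [DecidableEq T] [Fintype κ] {p : ℝ} (hp : 0 ≤ p)
    (hp' : p ≤ 1) (I : Finset ι) (C : ι → Finset T) (D : κ → Finset T) {N : ℕ}
    (hN : ∑ i ∈ I, p ^ #(C i) + N * ∑ j, (1 - p) ^ #(D j) < N) :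
    ∃ A : Finset T, #{i ∈ I | C i ⊆ A} < N ∧ ∀ j, ¬ Disjoint (D j) A := by
  have := Fintype.ofFinite T
  set bad : Finset T → ℝ := fun A => #{i ∈ I | C i ⊆ A} + N * #{j | Disjoint (D j) A}
  have htotal : ∑ A : Finset T, bernoulliWeight p A = 1 := by
    simpa using sum_bernoulliWeight_subset_disjoint p (disjoint_empty_left (∅ : Finset T))
  have hC (i : ι) : ∑ A : Finset T with C i ⊆ A, bernoulliWeight p A = p ^ #(C i) := by
    simpa using sum_bernoulliWeight_subset_disjoint p (disjoint_empty_right (C i))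
  have hD (j : κ) : ∑ A : Finset T with Disjoint (D j) A, bernoulliWeight p A =
      (1 - p) ^ #(D j) := by
    simpa using sum_bernoulliWeight_subset_disjoint p (disjoint_empty_left (D j))
  have hbad : ∑ A, bernoulliWeight p A * bad A =
      ∑ i ∈ I, p ^ #(C i) + N * ∑ j, (1 - p) ^ #(D j) := by
    simp only [bad, mul_add, sum_add_distrib, mul_left_comm _ (N : ℝ), ← mul_sum,
      sum_mul_card_filter, hC, hD]
  obtain ⟨A, -, hA⟩ : ∃ A ∈ univ, bernoulliWeight p A * bad A < bernoulliWeight p A * N := by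
    refine exists_lt_of_sum_lt ?_
    rwa [hbad, ← sum_mul, htotal, one_mul]
  have hweight : 0 ≤ bernoulliWeight p A :=
    mul_nonneg (pow_nonneg hp _) (pow_nonneg (sub_nonneg.mpr hp') _)
  have hlt : (#{i ∈ I | C i ⊆ A} + N * #{j | Disjoint (D j) A} : ℝ) < N :=
    lt_of_mul_lt_mul_left hA hweight
  norm_cast at hlt
  refine ⟨A, by omega, fun j hj => ?_⟩
  have : 0 < #{j | Disjoint (D j) A} := card_pos.mpr ⟨j, mem_filter.mpr ⟨mem_univ _, hj⟩⟩
  nlinarith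

theorem exists_forall_not_subset_and_not_disjoint [Fintype T] [Nonempty T] [Fintype κ] {p : ℝ}
    (hp : 0 ≤ p) (hp' : p ≤ 1) (I : Finset ι) (C : ι → Finset T) (D : κ → Finset T) {N m : ℕ}
    (hC : ∀ i ∈ I, (C i).Nonempty) (hD : ∀ j, m + N ≤ #(D j))
    (hN : ∑ i ∈ I, p ^ #(C i) + N * (Fintype.card κ * Fintype.card T ^ N * (1 - p) ^ m) < N) :
    ∃ A : Finset T, (∀ i ∈ I, ¬ C i ⊆ A) ∧ ∀ j, ¬ Disjoint (D j) A := by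
  classical
  -- One element of each selected `C i` will be deleted, so the union bound runs over all ways of
  -- deleting `N` elements from `T`.
  have hdel (j : κ) (X : Fin N → T) : m ≤ #(D j \ univ.image X) := by
    have hX : #(univ.image X) ≤ N := card_image_le.trans_eq (card_fin N)
    have := le_card_sdiff (univ.image X) (D j)
    have := hD j
    omega
  obtain ⟨A, hA, hA'⟩ := exists_card_filter_subset_lt hp hp' I C
    (fun x : κ × (Fin N → T) => D x.1 \ univ.image x.2) (N := N) (by
      refine lt_of_le_of_lt ?_ hN
      gcongr
      calc ∑ x : κ × (Fin N → T), (1 - p) ^ #(D x.1 \ univ.image x.2)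
          ≤ ∑ x : κ × (Fin N → T), (1 - p) ^ m := sum_le_sum fun x _ =>
            pow_le_pow_of_le_one (sub_nonneg.mpr hp') (sub_le_self 1 hp) (hdel x.1 x.2)
        _ = _ := by simp)
  choose! t ht using hC
  set P := {i ∈ I | C i ⊆ A}.image t
  obtain ⟨e⟩ : Nonempty (P ↪ Fin N) :=
    Function.Embedding.nonempty_of_card_le (by simpa using card_image_le.trans hA.le)
  set X : Fin N → T := Function.extend e (↑) fun _ => Classical.arbitrary T
  refine ⟨A \ univ.image X, fun i hi hCA => ?_, fun j hj => hA' (j, X) ?_⟩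
  · have hP : t i ∈ P :=
      mem_image_of_mem t (mem_filter.mpr ⟨hi, hCA.trans sdiff_subset⟩)
    refine (mem_sdiff.mp (hCA (ht i hi))).2 (mem_image.mpr ⟨e ⟨t i, hP⟩, mem_univ _, ?_⟩)
    exact e.injective.extend_apply _ _ _
  · rwa [disjoint_sdiff_comm]

end Deletion

section Sparsification

variable {V W γ κ : Type*}

open Classical in
/-- The edges of the closed walk `c 0, c 1, …, c s, c 0`; addition in `Fin (s + 1)` is cyclic. -/
noncomputable def cyclicEdges {s : ℕ} (c : Fin (s + 1) → W) : Finset (Sym2 W) :=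
  univ.image fun i => s(c i, c (i + 1))

open Classical in
theorem exists_cyclicEdges_eq_toFinset_edges {H : SimpleGraph W} {v : W}
    (w : H.Walk v v) {s : ℕ} (hs : w.length = s + 1) :
    ∃ c : Fin (s + 1) → W, cyclicEdges c = w.edges.toFinset := by
  refine ⟨fun i => w.getVert i, Finset.ext fun e => ?_⟩
  have hsucc (i : Fin (s + 1)) : w.getVert ↑(i + 1) = w.getVert (i + 1) := by
    rw [Fin.val_add_one]
    split_ifs with hi
    · rw [hi, Fin.val_last, ← hs, w.getVert_zero, w.getVert_length]
    · rfl
  simp only [cyclicEdges, hsucc, mem_image, mem_univ, true_and, List.mem_toFinset,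
    List.mem_iff_getElem, w.length_edges, hs, w.getElem_edges, Fin.exists_iff]

variable (W) in
/-- The cyclic sequences in `W` of length at most `ℓ` with pairwise distinct consecutive pairs:
a sequence of length `s + 1` is indexed by `s < ℓ`. -/
noncomputable def shortCycles [Fintype W] (ℓ : ℕ) : Finset (Σ s : Fin ℓ, Fin (s + 1) → W) :=
  {c | #(cyclicEdges c.2) = c.1 + 1}

theorem sum_shortCycles_pow_card_le [Fintype W] (ℓ : ℕ) {p : ℝ} (hp : 0 ≤ p)
    (hW : 1 ≤ Fintype.card W * p) :
    ∑ c ∈ shortCycles W ℓ, p ^ #(cyclicEdges c.2) ≤ ℓ * (Fintype.card W * p) ^ ℓ := by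
  calc ∑ c ∈ shortCycles W ℓ, p ^ #(cyclicEdges c.2)
      = ∑ c ∈ shortCycles W ℓ, p ^ (c.1 + 1 : ℕ) := sum_congr rfl fun c hc => by
        rw [(mem_filter.mp hc).2]
    _ ≤ ∑ c : Σ s : Fin ℓ, Fin (s + 1) → W, p ^ (c.1 + 1 : ℕ) :=
        sum_le_univ_sum_of_nonneg fun _ => by positivity
    _ = ∑ s : Fin ℓ, (Fintype.card W * p) ^ (s + 1 : ℕ) := by
        simp [Fintype.sum_sigma, mul_pow]
    _ ≤ ∑ _s : Fin ℓ, (Fintype.card W * p) ^ ℓ :=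
        sum_le_sum fun s _ => pow_le_pow_right₀ hW s.2
    _ = ℓ * (Fintype.card W * p) ^ ℓ := by simp

theorem lt_egirth_of_forall_shortCycles [Fintype W] {H : SimpleGraph W} {ℓ : ℕ}
    (h : ∀ c ∈ shortCycles W ℓ, ¬ (cyclicEdges c.2 : Set (Sym2 W)) ⊆ H.edgeSet) :
    (ℓ : ℕ∞) < H.egirth := by
  classical
  rw [← ENat.add_one_le_iff (ENat.natCast_ne_top ℓ), SimpleGraph.le_egirth]
  intro v w hw
  by_contra! hlt
  obtain ⟨s, hs⟩ : ∃ s, w.length = s + 1 := ⟨w.length - 1, by have := hw.three_le_length; omega⟩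
  obtain ⟨c, hc⟩ := exists_cyclicEdges_eq_toFinset_edges w hs
  have hsℓ : s < ℓ := by
    rw [hs] at hlt
    norm_cast at hlt
    omega
  refine h ⟨⟨s, hsℓ⟩, c⟩ (mem_filter.mpr ⟨mem_univ _, ?_⟩) fun e he => ?_
  · rw [hc, List.toFinset_card_of_nodup hw.isTrail.edges_nodup, w.length_edges, hs]
  · rw [mem_coe, hc, List.mem_toFinset] at he
    exact w.edges_subset_edgeSet he

theorem exists_le_lt_egirth_isEmpty_hom [Fintype W] [Nonempty W] [Finite γ] {B : SimpleGraph W}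
    {G : SimpleGraph γ} {N m : ℕ}
    (hB : ∀ φ : W → γ, m + N ≤ (B \ G.comap φ).edgeSet.ncard) (ℓ : ℕ) {p : ℝ} (hp : 0 ≤ p)
    (hp' : p ≤ 1) (hW : 1 ≤ Fintype.card W * p)
    (hN : ℓ * (Fintype.card W * p) ^ ℓ +
      N * (Nat.card γ ^ Fintype.card W * (Fintype.card W ^ 2) ^ N * (1 - p) ^ m) < N) :
    ∃ H ≤ B, (ℓ : ℕ∞) < H.egirth ∧ IsEmpty (H →g G) := by
  classical
  have := Fintype.ofFinite γ
  have : Nonempty (Sym2 W) := ‹Nonempty W›.map Sym2.diag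
  have hSym : Fintype.card (Sym2 W) ≤ Fintype.card W ^ 2 := by
    rw [sq, ← Fintype.card_prod]
    exact Fintype.card_le_of_surjective _ Sym2.mk_surjective
  obtain ⟨A, hcycle, hhom⟩ := exists_forall_not_subset_and_not_disjoint hp hp' (shortCycles W ℓ)
    (fun c => cyclicEdges c.2) (fun φ : W → γ => (B \ G.comap φ).edgeFinset) (N := N) (m := m)
    (fun c _ => univ_nonempty.image _)
    (fun φ => by
      rw [← Set.ncard_coe_finset, SimpleGraph.coe_edgeFinset]
      exact hB φ)
    (by
      refine lt_of_le_of_lt ?_ hN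
      have : 0 ≤ 1 - p := sub_nonneg.mpr hp'
      rw [Fintype.card_fun, Nat.card_eq_fintype_card]
      push_cast
      gcongr
      · exact sum_shortCycles_pow_card_le ℓ hp hW
      · exact_mod_cast hSym)
  refine ⟨B ⊓ SimpleGraph.fromEdgeSet A, inf_le_left, ?_, ⟨fun φ => ?_⟩⟩
  · refine lt_egirth_of_forall_shortCycles fun c hc hcA => hcycle c hc fun e he => ?_
    have := hcA (mem_coe.mpr he)
    rw [SimpleGraph.edgeSet_inf, SimpleGraph.edgeSet_fromEdgeSet] at this
    exact this.2.1
  · obtain ⟨e, heB, heA⟩ := not_disjoint_iff.mp (hhom φ)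
    induction e with | _ u v
    rw [SimpleGraph.mem_edgeFinset, SimpleGraph.mem_edgeSet, SimpleGraph.sdiff_adj] at heB
    refine heB.2 (φ.map_adj (⟨heB.1, ?_⟩ : (B ⊓ SimpleGraph.fromEdgeSet A).Adj u v))
    exact (SimpleGraph.fromEdgeSet_adj _).mpr ⟨heA, heB.1.ne⟩

theorem exists_card_le_card_mul_ncard_preimage [Finite κ] [Finite γ] [Nonempty γ] (f : κ → γ) :
    ∃ g, Nat.card κ ≤ Nat.card γ * (f ⁻¹' {g}).ncard := by
  classical
  have := Fintype.ofFinite κ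
  have := Fintype.ofFinite γ
  obtain ⟨g, hg⟩ := Finite.exists_max fun g => #{a | f a = g}
  refine ⟨g, ?_⟩
  have hcard := card_le_mul_card_image_of_maps_to (s := univ) (fun a _ => mem_univ (f a)) _
    fun g' _ => hg g'
  rwa [card_univ, card_univ, ← Nat.card_eq_fintype_card, ← Nat.card_eq_fintype_card, mul_comm,
    ← Set.ncard_coe_finset, coe_filter_univ] at hcard

theorem sq_card_le_sq_card_mul_ncard_edgeSet_sdiff [Finite V] [Finite κ] [Finite γ] [Nonempty γ]
    {H : SimpleGraph V} {G : SimpleGraph γ} (h : IsEmpty (H →g G)) (φ : V × κ → γ) :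
    Nat.card κ ^ 2 ≤ Nat.card γ ^ 2 * (H.comap Prod.fst \ G.comap φ).edgeSet.ncard := by
  choose g hg using fun i => exists_card_le_card_mul_ncard_preimage fun a => φ (i, a)
  obtain ⟨i, j, hij, hgij⟩ : ∃ i j, H.Adj i j ∧ ¬ G.Adj (g i) (g j) := by
    by_contra! hadj
    exact h.false ⟨g, fun {_ _} => hadj _ _⟩
  set A : Set κ := (fun a => φ (i, a)) ⁻¹' {g i}
  set B : Set κ := (fun b => φ (j, b)) ⁻¹' {g j}
  have hsubset : (fun x : κ × κ => s((i, x.1), (j, x.2))) ''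
      A ×ˢ B ⊆ (H.comap Prod.fst \ G.comap φ).edgeSet := by
    rintro _ ⟨⟨a, b⟩, ⟨ha, hb⟩, rfl⟩
    exact ⟨hij, by rwa [SimpleGraph.comap_adj, show φ (i, a) = g i from ha,
      show φ (j, b) = g j from hb]⟩
  have hinj : Function.Injective fun x : κ × κ => s((i, x.1), (j, x.2)) := by
    rintro ⟨a, b⟩ ⟨a', b'⟩ hab
    simpa [hij.ne] using hab
  have hcard := Set.ncard_le_ncard hsubset
  rw [Set.ncard_image_of_injective _ hinj, Set.ncard_prod] at hcard
  calc Nat.card κ ^ 2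
      ≤ (Nat.card γ * A.ncard) * (Nat.card γ * B.ncard) := by
        rw [sq]; exact Nat.mul_le_mul (hg i) (hg j)
    _ = Nat.card γ ^ 2 * (A.ncard * B.ncard) := by ring
    _ ≤ _ := Nat.mul_le_mul_left _ hcard

theorem exists_lt_and_mul_pow_mul_exp_lt (a k : ℕ) (C : ℝ) {δ : ℝ} (hδ : 0 < δ) :
    ∃ r : ℕ, a < r ∧ C * (r ^ k * Real.exp (-1) ^ r) < δ := by
  have hlim := (tendsto_pow_const_mul_const_pow_of_abs_lt_one k
    (by simp : |Real.exp (-1)| < 1)).const_mul C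
  rw [mul_zero] at hlim
  exact ((Filter.eventually_gt_atTop a).and (hlim.eventually_lt_const hδ)).exists

theorem pow_mul_one_sub_one_div_pow_le {K : ℕ} (hK : 0 < K) {a : ℝ} (ha : 0 ≤ a) (N r : ℕ) :
    a ^ N * (1 - 1 / K) ^ (N * r * K) ≤ (a * Real.exp (-1) ^ r) ^ N := by
  have hK' : (1 : ℝ) ≤ K := mod_cast hK
  have hbase : 0 ≤ (1 - 1 / K : ℝ) := sub_nonneg.mpr ((div_le_one (by positivity)).mpr hK')
  rw [mul_pow, ← pow_mul, mul_comm r N, mul_comm _ K, pow_mul _ K]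
  gcongr
  exact Real.one_sub_div_pow_le_exp_neg hK'

theorem exists_sparsification_parameters (ℓ : ℕ) {v q : ℕ} (hv : 0 < v) (hq : 0 < q) :
    ∃ (N m : ℕ) (p : ℝ), 0 < N ∧ q ^ 2 * (m + N) ≤ N ^ 2 ∧ 0 ≤ p ∧ p ≤ 1 ∧
      1 ≤ (v * N : ℕ) * p ∧ ℓ * ((v * N : ℕ) * p) ^ ℓ +
        N * (q ^ (v * N) * ((v * N : ℕ) ^ 2) ^ N * (1 - p) ^ m) < N := by
  obtain ⟨r, hr, hexp⟩ := exists_lt_and_mul_pow_mul_exp_lt (2 * ℓ * v ^ ℓ) (2 * (ℓ + 1))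
    (q ^ v * (v * (2 * q ^ 2) ^ (ℓ + 1)) ^ 2) one_half_pos
  set M := 2 * q ^ 2 * r
  have hM : 2 * ℓ * v ^ ℓ < M := hr.trans_le (Nat.le_mul_of_pos_left r (by positivity))
  have hM₀ : 0 < M := by omega
  set K := M ^ ℓ
  set N := M * K
  have hK : 0 < K := by positivity
  have hp : ((v * N : ℕ) * (1 / K) : ℝ) = v * M := by
    simp only [N]
    push_cast
    field_simp
  refine ⟨N, N * r * K, 1 / K, by positivity, ?_, by positivity, ?_, ?_, ?_⟩
  · have hrK : 1 ≤ r * K := Nat.mul_pos (by omega) hK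
    calc q ^ 2 * (N * r * K + N) = q ^ 2 * N * (r * K + 1) := by ring
      _ ≤ q ^ 2 * N * (r * K + r * K) := by gcongr
      _ = N ^ 2 := by simp only [N, M]; ring
  · exact (div_le_one (by positivity)).mpr (mod_cast hK)
  · rw [hp]
    exact_mod_cast Nat.mul_pos hv hM₀
  · rw [hp]
    have hcycles : (2 * (ℓ * (v * M) ^ ℓ) : ℝ) < N := by
      have : 2 * ℓ * v ^ ℓ * K < M * K := by gcongr
      rw [mul_pow, ← mul_assoc, ← mul_assoc]
      exact_mod_cast this
    have hhoms : q ^ (v * N) * ((v * N : ℕ) ^ 2) ^ N * (1 - 1 / (K : ℝ)) ^ (N * r * K) ≤ 1 / 2 := by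
      have hbase : (q ^ v * (v * N : ℕ) ^ 2 * Real.exp (-1) ^ r : ℝ) < 1 / 2 := by
        refine hexp.trans_eq' ?_
        simp only [N, K, M]
        push_cast
        ring
      rw [pow_mul, ← mul_pow]
      refine (pow_mul_one_sub_one_div_pow_le hK (by positivity) N r).trans ?_
      exact (pow_le_of_le_one (by positivity) (by linarith) (by positivity)).trans hbase.le
    linarith [mul_le_mul_of_nonneg_left hhoms N.cast_nonneg]

theorem exists_le_comap_fst_lt_egirth_isEmpty_hom [Finite V] [Finite γ] {H : SimpleGraph V}
    {G : SimpleGraph γ} (h : IsEmpty (H →g G)) (ℓ : ℕ) :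
    ∃ N : ℕ, 0 < N ∧ ∃ H' ≤ H.comap (Prod.fst : V × Fin N → V), (ℓ : ℕ∞) < H'.egirth ∧
      IsEmpty (H' →g G) := by
  have := Fintype.ofFinite V
  have : Nonempty V := by
    by_contra! hV
    exact h.false ⟨hV.elim, fun {v} => hV.elim v⟩
  obtain hγ | hγ := isEmpty_or_nonempty γ
  · exact ⟨1, one_pos, ⊥, bot_le, by simp, ⟨fun φ => hγ.elim (φ (Classical.arbitrary V, 0))⟩⟩
  have hcard (N : ℕ) : Fintype.card (V × Fin N) = Fintype.card V * N := by
    rw [Fintype.card_prod, Fintype.card_fin]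
  obtain ⟨N, m, p, hN, hm, hp, hp', hlarge, hsmall⟩ := exists_sparsification_parameters ℓ
    (Fintype.card_pos (α := V)) (Nat.card_pos (α := γ))
  have : NeZero N := ⟨hN.ne'⟩
  refine ⟨N, hN, exists_le_lt_egirth_isEmpty_hom (fun φ => ?_) ℓ hp hp' (hcard N ▸ hlarge)
    (hcard N ▸ hsmall)⟩
  have hviolated := sq_card_le_sq_card_mul_ncard_edgeSet_sdiff h φ
  rw [Nat.card_fin] at hviolated
  exact le_of_mul_le_mul_left (hm.trans hviolated) (pow_pos Nat.card_pos 2)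

end Sparsification

end

/-- If `F` has at least one edge and there is no homomorphism from
`F` to `G`, then for every positive integer `ℓ` there is a graph `H` that is
`F`-abundant, has girth greater than `ℓ` (no cycle of length at most `ℓ`), and
admits no homomorphism to `G`. -/
theorem stmt_3 {α γ : Type*} [Fintype α] [Fintype γ]
    (ℓ : ℕ) (hℓ : 0 < ℓ) (F : SimpleGraph α) (G : SimpleGraph γ)
    (hF : F.edgeSet.Nonempty) (hFG : IsEmpty (F →g G)) :
    ∃ (n : ℕ) (H : SimpleGraph (Fin n)), Abundant F H ∧
      (∀ (v : Fin n) (w : H.Walk v v), w.IsCycle → ℓ < w.length) ∧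
      IsEmpty (H →g G) := by
  set F' := F.induce F.support
  have hcopy : ContainsCopy F' F :=
    ⟨(SimpleGraph.Embedding.induce F.support).toHom, Subtype.val_injective⟩
  have hF' : ∀ i, ∃ j, F'.Adj i j := exists_adj_induce_support F
  have : Nonempty F.support := (nonempty_support hF).to_subtype
  obtain ⟨N, hN, H, hH, hgirth, hHG⟩ := exists_le_comap_fst_lt_egirth_isEmpty_hom
    (isEmpty_hom_strategyGraph (isEmpty_hom_of_induce_support hF hFG) (Nat.lt_succ_self _)) ℓ
  have : Nonempty (Fin N) := ⟨⟨0, hN⟩⟩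
  have hab : Abundant F H := (homAbundant_of_le_comap_strategyGraph hF' hH).abundant.mono hcopy
  obtain ⟨n, ⟨e⟩⟩ := Finite.exists_equiv_fin ((Word F'.Dart _ × F.support) × Fin N)
  let iso := SimpleGraph.Iso.map e H
  refine ⟨n, _, hab.congr iso, fun v w hw => ?_, ⟨fun φ => hHG.false (φ.comp iso.toHom)⟩⟩
  exact_mod_cast (iso.egirth_eq ▸ hgirth).trans_le (SimpleGraph.egirth_le_length hw)
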